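/- arXiv:2405.04617 — 2 statements merged into one kernel-verified Lean document; each statement's English description precedes it below -/
import Mathlib

section
/- Let μ ≥ 1 be an integer, let G be a finite simple graph, and let (T, β) be a tree decomposition of G with μ(T, β) ≤ μ. Let L' ⊆ V(G) be a set such that G[L'] is connected and contains at least one edge, let T' be the subtree of T induced by the nodes whose bags intersect L', and let A ⊆ V(G) be a set such that no vertex of A belongs to L' or has a neighbor in L', and such that for every v ∈ A the subtree T_v shares a node with T'. Then the induced matching treewidth of G[A] is at most μ − 1. -/
open SimpleGraph

/-- A tree decomposition of a (finite, simple) graph `G`: a finite tree `T` together with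
bags `bag x ⊆ V` such that every vertex is in a bag, every edge is inside some bag, and for
every vertex the set of nodes whose bag contains it induces a connected subtree of `T`. -/
structure TreeDecomp {V : Type} (G : SimpleGraph V) where
  ι : Type
  fintype_ι : Fintype ι
  T : SimpleGraph ι
  isTree : T.IsTree
  bag : ι → Set V
  mem_bag : ∀ v : V, ∃ x : ι, v ∈ bag x
  edge_bag : ∀ ⦃u v : V⦄, G.Adj u v → ∃ x : ι, u ∈ bag x ∧ v ∈ bag x
  bag_conn : ∀ v : V, (T.induce {x : ι | v ∈ bag x}).Connected

/-- `a`, `b` enumerate the endpoints of an induced matching of size `n` in `G`: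
the edges `a i — b i` are present, and endpoints of distinct edges are pairwise distinct
and non-adjacent. -/
def IsIndMatching {V : Type} (G : SimpleGraph V) {n : ℕ} (a b : Fin n → V) : Prop :=
  (∀ i, G.Adj (a i) (b i)) ∧
  ∀ i j : Fin n, i ≠ j →
    a i ≠ a j ∧ a i ≠ b j ∧ b i ≠ a j ∧ b i ≠ b j ∧
    ¬ G.Adj (a i) (a j) ∧ ¬ G.Adj (a i) (b j) ∧ ¬ G.Adj (b i) (a j) ∧ ¬ G.Adj (b i) (b j)

/-- `μ(T,β) ≤ μ`: every induced matching touching a bag of the decomposition has size at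
most `μ`. -/
def TreeDecomp.MuLE {V : Type} {G : SimpleGraph V} (td : TreeDecomp G) (μ : ℕ) : Prop :=
  ∀ (x : td.ι) (n : ℕ) (a b : Fin n → V),
    IsIndMatching G a b → (∀ i, a i ∈ td.bag x ∨ b i ∈ td.bag x) → n ≤ μ

/-- `α(T,β) ≤ k`: every independent set contained in a single bag has size at most `k`. -/
def TreeDecomp.AlphaLE {V : Type} {G : SimpleGraph V} (td : TreeDecomp G) (k : ℕ) : Prop :=
  ∀ (x : td.ι) (I : Finset V), ↑I ⊆ td.bag x →
    ((I : Set V)).Pairwise (fun u v => ¬ G.Adj u v) → I.card ≤ k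

/-- The induced matching treewidth `tree-μ(G)`: the least `n` admitting a tree decomposition
with `μ(T,β) ≤ n`. -/
noncomputable def treeMu {V : Type} (G : SimpleGraph V) : ℕ :=
  sInf {n | ∃ td : TreeDecomp G, td.MuLE n}

/-- The tree-independence number `tree-α(G)`: the least `n` admitting a tree decomposition
with `α(T,β) ≤ n`. -/
noncomputable def treeAlpha {V : Type} (G : SimpleGraph V) : ℕ :=
  sInf {n | ∃ td : TreeDecomp G, td.AlphaLE n}

/-! Keep only the nodes of `T'` and intersect their bags with `A`. By the Helly property of
subtrees, an edge `uv` of `G[A]` still lies in a bag, because `T_u`, `T_v` and `T'` pairwise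
intersect. If `x` is a node of `T'`, then some edge of `G[L']` has an endpoint in `β(x)`; as `A` is
anticomplete to `L'`, this edge enlarges every induced matching of `G[A]` touching `β(x)`. -/

section Subtrees

variable {ι : Type*} {T : SimpleGraph ι} {S Q R : Set ι}

theorem exists_isPath_support_subset (hS : (T.induce S).Preconnected) {a b : ι} (ha : a ∈ S)
    (hb : b ∈ S) : ∃ p : T.Walk a b, p.IsPath ∧ ∀ x ∈ p.support, x ∈ S := by
  obtain ⟨q, hq⟩ := hS.exists_isPath ⟨a, ha⟩ ⟨b, hb⟩
  refine ⟨q.map (Embedding.induce S).toHom, hq.map Subtype.val_injective, fun x hx => ?_⟩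
  obtain ⟨y, -, rfl⟩ := List.mem_map.1 (q.support_map (Embedding.induce S).toHom ▸ hx)
  exact y.2

theorem support_subset_of_isPath (hT : T.IsAcyclic) (hS : (T.induce S).Preconnected) {a b : ι}
    (ha : a ∈ S) (hb : b ∈ S) {p : T.Walk a b} (hp : p.IsPath) : ∀ x ∈ p.support, x ∈ S := by
  obtain ⟨q, hq, hqS⟩ := exists_isPath_support_subset hS ha hb
  have hpq : p = q := congrArg Subtype.val ((hT.subsingleton_path a b).elim ⟨p, hp⟩ ⟨q, hq⟩)
  exact hpq ▸ hqS

theorem preconnected_induce_induce_preimage (hT : T.IsAcyclic) (hS : (T.induce S).Preconnected)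
    (hR : (T.induce R).Preconnected) :
    ((T.induce S).induce (Subtype.val ⁻¹' R)).Preconnected := by
  rintro ⟨⟨a, haS⟩, haR⟩ ⟨⟨b, hbS⟩, hbR⟩
  obtain ⟨p, hp, hpS⟩ := exists_isPath_support_subset hS haS hbS
  have hpR := support_subset_of_isPath hT hR haR hbR hp
  refine ⟨(p.induce S hpS).induce _ fun x hx => hpR x ?_⟩
  simpa using hx

theorem mem_or_mem_of_adj (hT : T.IsAcyclic) (hS : (T.induce S).Preconnected)
    (hR : (T.induce R).Preconnected) (hSR : (S ∩ R).Nonempty) {x y : ι} (hx : x ∈ S) (hy : y ∈ R)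
    (hxy : T.Adj x y) : x ∈ R ∨ y ∈ S := by
  obtain ⟨c, hcS, hcR⟩ := hSR
  obtain ⟨p, hp, hpS⟩ := exists_isPath_support_subset hS hx hcS
  by_cases hyp : y ∈ p.support
  · exact .inr (hpS y hyp)
  · have hyxp : (p.cons hxy.symm).IsPath := hp.cons hyp
    exact .inl (support_subset_of_isPath hT hR hy hcR hyxp x (by simp))

theorem inter_inter_nonempty_of_isAcyclic (hT : T.IsAcyclic) (hS : (T.induce S).Preconnected)
    (hQ : (T.induce Q).Preconnected) (hR : (T.induce R).Preconnected) (hSQ : (S ∩ Q).Nonempty)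
    (hQR : (Q ∩ R).Nonempty) (hSR : (S ∩ R).Nonempty) : (S ∩ Q ∩ R).Nonempty := by
  obtain ⟨a, haS, haQ⟩ := hSQ
  obtain ⟨b, hbQ, hbR⟩ := hQR
  by_cases hbS : b ∈ S
  · exact ⟨b, ⟨hbS, hbQ⟩, hbR⟩
  obtain ⟨p, hp, hpQ⟩ := exists_isPath_support_subset hQ haQ hbQ
  have hpSR := support_subset_of_isPath hT (induce_union_connected hS hR hSR).preconnected
    (.inl haS) (.inr hbR) hp
  -- The path from `a` to `b` stays in `Q ∩ (S ∪ R)`; look at the edge along which it leaves `S`.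
  obtain ⟨d, hd, hdS, hdS'⟩ := p.exists_boundary_dart S haS hbS
  have hdR : d.snd ∈ R := (hpSR _ (p.dart_snd_mem_support_of_mem_darts hd)).resolve_left hdS'
  exact ⟨d.fst, ⟨hdS, hpQ _ (p.dart_fst_mem_support_of_mem_darts hd)⟩,
    (mem_or_mem_of_adj hT hS hR hSR hdS hdR d.adj).resolve_right hdS'⟩

theorem preconnected_induce_iUnion {W : Type*} {H : SimpleGraph W} (hH : H.Preconnected)
    {B : W → Set ι} (hB : ∀ w, (T.induce (B w)).Preconnected)
    (hadj : ∀ ⦃w w'⦄, H.Adj w w' → (B w ∩ B w').Nonempty) :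
    (T.induce (⋃ w, B w)).Preconnected := by
  have reachable_of_mem (w : W) {x y : ι} (hx : x ∈ B w) (hy : y ∈ B w) :
      (T.induce (⋃ w, B w)).Reachable ⟨x, Set.mem_iUnion_of_mem w hx⟩
        ⟨y, Set.mem_iUnion_of_mem w hy⟩ :=
    (hB w ⟨x, hx⟩ ⟨y, hy⟩).map (induceHomOfLE T (Set.subset_iUnion B w)).toHom
  rintro ⟨x, hx⟩ ⟨y, hy⟩
  obtain ⟨w, hxw⟩ := Set.mem_iUnion.1 hx
  obtain ⟨w', hyw'⟩ := Set.mem_iUnion.1 hy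
  obtain ⟨p⟩ := hH w w'
  induction p generalizing x with
  | nil => exact reachable_of_mem _ hxw hyw'
  | cons h _ ih =>
    obtain ⟨z, hz, hz'⟩ := hadj h
    exact (reachable_of_mem _ hxw hz).trans (ih z (Set.mem_iUnion_of_mem _ hz') hz' hyw')

end Subtrees

section IndMatching

variable {V W : Type} {G : SimpleGraph V} {H : SimpleGraph W} {n : ℕ}

-- A vertex shared by two edges is adjacent to the other end of each, so distinctness is automatic.
theorem isIndMatching_iff {a b : Fin n → V} :
    IsIndMatching G a b ↔ (∀ i, G.Adj (a i) (b i)) ∧ ∀ i j, i ≠ j →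
      ¬G.Adj (a i) (a j) ∧ ¬G.Adj (a i) (b j) ∧ ¬G.Adj (b i) (a j) ∧ ¬G.Adj (b i) (b j) := by
  refine and_congr_right fun hab => forall₃_congr fun i j _ =>
    ⟨fun ⟨_, _, _, _, h⟩ => h, fun ⟨haa, hab', hba, hbb⟩ => ⟨?_, ?_, ?_, ?_, haa, hab', hba, hbb⟩⟩
  · exact fun h => hab' (h ▸ hab j)
  · exact fun h => haa (h ▸ (hab j).symm)
  · exact fun h => hbb (h ▸ hab j)
  · exact fun h => hba (h ▸ (hab j).symm)

theorem IsIndMatching.map {a b : Fin n → W} (h : IsIndMatching H a b) (f : H ↪g G) :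
    IsIndMatching G (f ∘ a) (f ∘ b) := by
  simpa only [isIndMatching_iff, Function.comp_apply, f.map_adj_iff] using h

theorem IsIndMatching.cons {a b : Fin n → V} (h : IsIndMatching G a b) {w w' : V}
    (hww' : G.Adj w w') (ha : ∀ i, ¬G.Adj w (a i) ∧ ¬G.Adj w' (a i))
    (hb : ∀ i, ¬G.Adj w (b i) ∧ ¬G.Adj w' (b i)) :
    IsIndMatching G (Fin.cons w a : Fin (n + 1) → V) (Fin.cons w' b) := by
  rw [isIndMatching_iff] at h ⊢
  refine ⟨Fin.cases hww' h.1, Fin.cases (Fin.cases ?_ fun j _ => ?_) fun i => Fin.cases ?_ ?_⟩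
  · exact fun h₀ => absurd rfl h₀
  · exact ⟨(ha j).1, (hb j).1, (ha j).2, (hb j).2⟩
  · rintro -
    simp only [Fin.cons_zero, Fin.cons_succ, G.adj_comm _ w, G.adj_comm _ w']
    exact ⟨(ha i).1, (ha i).2, (hb i).1, (hb i).2⟩
  · exact fun j hij => h.2 i j (ne_of_apply_ne Fin.succ hij)

end IndMatching

namespace TreeDecomp

variable {V : Type} {G : SimpleGraph V} {td : TreeDecomp G}

/-- The nodes of the decomposition whose bag intersects `L`; for `L = L'` these are the nodes of
the subtree `T'`. -/
def nodesMeeting (td : TreeDecomp G) (L : Set V) : Set td.ι :=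
  {x | (td.bag x ∩ L).Nonempty}

theorem nodesMeeting_eq_iUnion (L : Set V) :
    td.nodesMeeting L = ⋃ w : L, {x | w.1 ∈ td.bag x} := by
  ext x
  simp [nodesMeeting, Set.Nonempty, and_comm]

theorem connected_induce_nodesMeeting {L : Set V} (hL : (G.induce L).Connected) :
    (td.T.induce (td.nodesMeeting L)).Connected := by
  obtain ⟨w⟩ := hL.nonempty
  obtain ⟨x, hx⟩ := td.mem_bag w
  have : Nonempty (td.nodesMeeting L) := ⟨x, w, hx, w.2⟩
  refine ⟨?_⟩
  rw [nodesMeeting_eq_iUnion]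
  exact preconnected_induce_iUnion hL.preconnected (fun w => (td.bag_conn w).preconnected)
    fun _ _ h => td.edge_bag h

/-- The tree decomposition of `G[A]` whose tree is the subtree of `T` on the node set `P` and whose
bags are the sets `β(x) ∩ A`, viewed as sets of elements of the subtype `A`. -/
noncomputable def restrict (td : TreeDecomp G) {P : Set td.ι} (hP : (td.T.induce P).Connected)
    {A : Set V} (hA : ∀ v ∈ A, ∃ x ∈ P, v ∈ td.bag x) : TreeDecomp (G.induce A) where
  ι := P
  fintype_ι := letI := td.fintype_ι; Fintype.ofFinite P
  T := td.T.induce P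
  isTree := ⟨hP, td.isTree.isAcyclic.induce P⟩
  bag x := {v | v.1 ∈ td.bag x}
  mem_bag v := by
    obtain ⟨x, hxP, hvx⟩ := hA v v.2
    exact ⟨⟨x, hxP⟩, hvx⟩
  edge_bag u v huv := by
    obtain ⟨x, ⟨hux, hvx⟩, hxP⟩ := inter_inter_nonempty_of_isAcyclic td.isTree.isAcyclic
      (td.bag_conn u).preconnected (td.bag_conn v).preconnected hP.preconnected
      (td.edge_bag huv) ((hA v v.2).imp fun _ => And.symm) ((hA u u.2).imp fun _ => And.symm)
    exact ⟨⟨x, hxP⟩, hux, hvx⟩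
  bag_conn v := by
    obtain ⟨x, hxP, hvx⟩ := hA v v.2
    have : Nonempty {x : P | v ∈ {v : A | v.1 ∈ td.bag x}} := ⟨⟨x, hxP⟩, hvx⟩
    exact ⟨preconnected_induce_induce_preimage td.isTree.isAcyclic hP.preconnected
      (td.bag_conn v).preconnected⟩

theorem MuLE.restrict {μ : ℕ} (htd : td.MuLE μ) {P : Set td.ι} (hP : (td.T.induce P).Connected)
    {A : Set V} (hA : ∀ v ∈ A, ∃ x ∈ P, v ∈ td.bag x)
    (hedge : ∀ x ∈ P, ∃ w ∈ td.bag x, ∃ w', G.Adj w w' ∧ ∀ v ∈ A, ¬G.Adj w v ∧ ¬G.Adj w' v) :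
    (td.restrict hP hA).MuLE (μ - 1) := by
  intro x n a b hab htouch
  obtain ⟨w, hwx, w', hww', hfar⟩ := hedge x.1 x.2
  have hcons := (hab.map (Embedding.induce A)).cons hww' (fun i => hfar _ (a i).2)
    fun i => hfar _ (b i).2
  exact Nat.le_sub_of_add_le (htd x.1 (n + 1) _ _ hcons (Fin.cases (.inl hwx) htouch))

theorem MuLE.treeMu_le {n : ℕ} (htd : td.MuLE n) : treeMu G ≤ n :=
  Nat.sInf_le ⟨td, htd⟩

end TreeDecomp

theorem exists_adj_mem_of_preconnected_induce {V : Type*} {G : SimpleGraph V} {L : Set V}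
    (hL : (G.induce L).Preconnected) (hnt : L.Nontrivial) {w : V} (hw : w ∈ L) :
    ∃ w' ∈ L, G.Adj w w' := by
  have := hnt.coe_sort
  obtain ⟨w', hww'⟩ := hL.exists_adj_of_nontrivial ⟨w, hw⟩
  exact ⟨w', w'.2, hww'⟩

theorem stmt11_general {μ : ℕ} {V : Type} {G : SimpleGraph V} {td : TreeDecomp G}
    (htd : td.MuLE μ) {L' : Set V} (hconn : (G.induce L').Connected)
    (hedge : ∃ u v, u ∈ L' ∧ v ∈ L' ∧ G.Adj u v) {A : Set V}
    (hA : ∀ v ∈ A, ∀ u ∈ L', ¬G.Adj v u)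
    (hshare : ∀ v ∈ A, ∃ x : td.ι, v ∈ td.bag x ∧ (td.bag x ∩ L').Nonempty) :
    treeMu (G.induce A) ≤ μ - 1 := by
  obtain ⟨u, v, hu, hv, huv⟩ := hedge
  have hcover : ∀ v ∈ A, ∃ x ∈ td.nodesMeeting L', v ∈ td.bag x :=
    fun v hv => (hshare v hv).imp fun _ => And.symm
  refine (htd.restrict (TreeDecomp.connected_induce_nodesMeeting hconn) hcover ?_).treeMu_le
  rintro x ⟨w, hwx, hw⟩
  obtain ⟨w', hw', hww'⟩ :=
    exists_adj_mem_of_preconnected_induce hconn.preconnected ⟨u, hu, v, hv, huv.ne⟩ hw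
  exact ⟨w, hwx, w', hww', fun v hv =>
    ⟨fun h => hA v hv w hw h.symm, fun h => hA v hv w' hw' h.symm⟩⟩

/-- Let `(T, β)` be a tree decomposition of a finite graph `G` with `μ(T,β) ≤ μ` (`μ ≥ 1`),
let `L'` induce a connected subgraph of `G` containing at least one edge, and let
`A ⊆ V(G)` be a set of vertices that are not in `L'` and have no neighbour in `L'`, such
that for every `v ∈ A` the subtree `T_v` shares a node with the subtree `T'` of `T` induced
by the nodes whose bags intersect `L'`. Then `tree-μ(G[A]) ≤ μ - 1`. -/
theorem stmt11 (μ : ℕ) (hμ : 1 ≤ μ) (V : Type) [Fintype V] (G : SimpleGraph V)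
    (td : TreeDecomp G) (htd : td.MuLE μ)
    (L' : Set V) (hconn : (G.induce L').Connected)
    (hedge : ∃ u v, u ∈ L' ∧ v ∈ L' ∧ G.Adj u v)
    (A : Set V)
    (hA : ∀ v ∈ A, v ∉ L' ∧ ∀ u ∈ L', ¬ G.Adj v u)
    (hshare : ∀ v ∈ A, ∃ x : td.ι, v ∈ td.bag x ∧ (td.bag x ∩ L').Nonempty) :
    treeMu (G.induce A) ≤ μ - 1 :=
  stmt11_general htd hconn hedge (fun v hv => (hA v hv).2) hshare
end

section
/- For all positive integers μ and t, there exists an integer K'(μ,t) such that every finite simple graph G with induced matching treewidth at most μ that contains no K_{t,t} subgraph (not necessarily induced) has treewidth strictly less than K'(μ,t). -/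
open SimpleGraph

/-- Width bound for a tree decomposition: every bag has size at most `w + 1`. -/
def TreeDecomp.WidthLE {V : Type} {G : SimpleGraph V} (td : TreeDecomp G) (w : ℕ) : Prop :=
  ∀ x : td.ι, (td.bag x).ncard ≤ w + 1

/-- The treewidth of a finite graph: the least `w` admitting a tree decomposition all of
whose bags have size at most `w + 1`. -/
noncomputable def treewidth {V : Type} (G : SimpleGraph V) : ℕ :=
  sInf {w | ∃ td : TreeDecomp G, td.WidthLE w}

/-!
Take a decomposition with `μ(T, β) ≤ μ`. A large matching touching a bag would contain, by Ramsey's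
theorem, either a large induced matching touching that bag or a half graph, which contains
`K_{t,t}`. Hence every bag `β(x)` has boundedly many vertices, `d` say, covering all edges that
touch it, namely the endpoints of a maximal matching. A vertex of `β(x)` outside this cover `C` has
all its neighbours in `C`, so its degree is at most `d`. The number of such vertices may still be
unbounded, but those having a neighbour of degree at most `d` lie in the neighbourhoods of the
low-degree vertices of `C`, so there are at most `d * d` of them. The remaining ones belong to the
independent set `I` of low-degree vertices all of whose neighbours have high degree. In every bag
replace the vertices of `I` by their neighbours, and give each `w ∈ I` a new leaf with bag `N[w]`:
the new bags have at most `d + d * d` or `d + 1` vertices.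
-/

section Ramsey

variable {κ α : Type*} [Fintype κ] [LinearOrder α]

/-- The upper bound `(q + 1) ^ (q * m)` on the Ramsey number for pairs in `q` colours and a
monochromatic set of size `m`, used to say how large a matching forces a homogeneous one. -/
def ramseyBound (q m : ℕ) : ℕ :=
  (q + 1) ^ (q * m)

lemma exists_subset_color_eq_left (c : α → α → κ) (m : ℕ) (S : Finset α)
    (hS : (Fintype.card κ + 1) ^ m ≤ S.card) :
    ∃ S' ⊆ S, S'.card = m ∧ ∃ f : α → κ, ∀ i ∈ S', ∀ j ∈ S', i < j → c i j = f i := by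
  classical
  induction m generalizing S with
  | zero => exact ⟨∅, by simp, rfl, fun i => c i i, by simp⟩
  | succ m ih =>
    have hpos : 0 < (Fintype.card κ + 1) ^ m := by positivity
    rw [pow_succ] at hS
    have hne : S.Nonempty := by
      rw [← Finset.card_pos]
      nlinarith
    obtain ⟨a, ha⟩ : ∃ a, IsLeast (S : Set α) a := ⟨_, S.isLeast_min' hne⟩
    have hcard : (S.erase a).card + 1 = S.card := Finset.card_erase_add_one ha.1
    obtain ⟨k, -, hk⟩ := Finset.exists_le_card_fiber_of_mul_le_card_of_maps_to
      (s := S.erase a) (f := c a) (n := (Fintype.card κ + 1) ^ m)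
      (fun _ _ => Finset.mem_univ _) ⟨c a a, Finset.mem_univ _⟩
      (by rw [Finset.card_univ]; nlinarith)
    obtain ⟨S', hS', hcardS', f, hf⟩ := ih _ hk
    have hlt : ∀ i ∈ S', a < i ∧ c a i = k ∧ i ∈ S := fun i hi => by
      obtain ⟨⟨hia, hiS⟩, hik⟩ : (i ≠ a ∧ i ∈ S) ∧ c a i = k := by simpa using hS' hi
      exact ⟨(ha.2 hiS).lt_of_ne' hia, hik, hiS⟩
    have haS' : a ∉ S' := fun h => (hlt a h).1.false
    refine ⟨insert a S', Finset.insert_subset ha.1 fun i hi => (hlt i hi).2.2,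
      by rw [Finset.card_insert_of_notMem haS', hcardS'], Function.update f a k, ?_⟩
    intro i hi j hj hij
    have haj : a < j := ((Finset.mem_insert.1 hi).elim Eq.ge fun h => (hlt i h).1.le).trans_lt hij
    have hjS' : j ∈ S' := (Finset.mem_insert.1 hj).resolve_left haj.ne'
    rcases Finset.mem_insert.1 hi with rfl | hiS'
    · rw [Function.update_self, (hlt j hjS').2.1]
    · rw [Function.update_of_ne (hlt i hiS').1.ne', hf i hiS' j hjS' hij]

lemma exists_subset_monochromatic (c : α → α → κ) (m : ℕ) (S : Finset α)
    (hS : ramseyBound (Fintype.card κ) m ≤ S.card) :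
    ∃ S' ⊆ S, S'.card = m ∧ ∃ k : κ, ∀ i ∈ S', ∀ j ∈ S', i < j → c i j = k := by
  classical
  obtain ⟨T, hTS, hcardT, f, hf⟩ := exists_subset_color_eq_left c _ S hS
  obtain ⟨i₀, -⟩ : S.Nonempty :=
    Finset.card_pos.1 ((Nat.pow_pos (Nat.succ_pos _)).trans_le hS)
  obtain ⟨k, -, hk⟩ := Finset.exists_le_card_fiber_of_mul_le_card_of_maps_to
    (s := T) (f := f) (n := m) (fun _ _ => Finset.mem_univ _) ⟨f i₀, Finset.mem_univ _⟩
    (by rw [Finset.card_univ, hcardT])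
  obtain ⟨S', hS', hcardS'⟩ := Finset.exists_subset_card_eq hk
  have hmem : ∀ i ∈ S', i ∈ T ∧ f i = k := fun i hi => by simpa using hS' hi
  refine ⟨S', fun i hi => hTS (hmem i hi).1, hcardS', k, fun i hi j hj hij => ?_⟩
  rw [hf i (hmem i hi).1 j (hmem j hj).1 hij, (hmem i hi).2]

end Ramsey

section Matching

lemma completeBipartiteGraph_isContained_of_lt_adj {V : Type*} {G : SimpleGraph V} {t m : ℕ}
    (hm : 2 * t ≤ m) {p q : Fin m → V} (hp : Function.Injective p) (hq : Function.Injective q)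
    (h : ∀ i j, i < j → G.Adj (p i) (q j)) :
    completeBipartiteGraph (Fin t) (Fin t) ⊑ G := by
  have hm' : t + t ≤ m := by omega
  let low : Fin t ↪ Fin m := (Fin.castAddEmb t).trans (Fin.castLEEmb hm')
  let high : Fin t ↪ Fin m := (Fin.natAddEmb t).trans (Fin.castLEEmb hm')
  have hlt : ∀ i j, low i < high j := fun i j => Fin.lt_def.2 (by simp [low, high]; omega)
  refine completeBipartiteGraph_isContained_iff.2
    ⟨Finset.univ.map (low.trans ⟨p, hp⟩), Finset.univ.map (high.trans ⟨q, hq⟩),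
      by simp, by simp, ?_⟩
  simp only [IsCompleteBetween, Finset.mem_coe, Finset.mem_map, Finset.mem_univ, true_and]
  rintro _ ⟨i, rfl⟩ _ ⟨j, rfl⟩
  exact h _ _ (hlt i j)

/-- `a` and `b` enumerate the endpoints of a (not necessarily induced) matching `a i — b i` of `G`
indexed by `ι`. It is the counterpart of `IsIndMatching` without the condition on non-adjacency. -/
structure IsMatchingEnum {V ι : Type*} (G : SimpleGraph V) (a b : ι → V) : Prop where
  adj : ∀ i, G.Adj (a i) (b i)
  injective : Function.Injective (Sum.elim a b)

namespace IsMatchingEnum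

lemma isIndMatching {V : Type} {G : SimpleGraph V} {n : ℕ} {a b : Fin n → V}
    (h : IsMatchingEnum G a b)
    (hadj : ∀ i j, i ≠ j → ∀ s s' : Fin 2, ¬ G.Adj (![a, b] s i) (![a, b] s' j)) :
    IsIndMatching G a b := by
  obtain ⟨ha, hb, hab⟩ := Sum.elim_injective.1 h.injective
  exact ⟨h.adj, fun i j hij => ⟨ha.ne hij, hab i j, (hab j i).symm, hb.ne hij,
    hadj i j hij 0 0, hadj i j hij 0 1, hadj i j hij 1 0, hadj i j hij 1 1⟩⟩

lemma comp {V ι ι' : Type*} {G : SimpleGraph V} {a b : ι → V} (h : IsMatchingEnum G a b)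
    (e : ι' ↪ ι) : IsMatchingEnum G (a ∘ e) (b ∘ e) where
  adj i := h.adj (e i)
  injective := by
    rw [← Sum.elim_comp_map]
    exact h.injective.comp (e.injective.sumMap e.injective)

lemma cons {V : Type*} {G : SimpleGraph V} {n : ℕ} {a b : Fin n → V} (h : IsMatchingEnum G a b)
    {u v : V} (huv : G.Adj u v) (hu : u ∉ Set.range (Sum.elim a b))
    (hv : v ∉ Set.range (Sum.elim a b)) :
    IsMatchingEnum G (Fin.cons u a : Fin (n + 1) → V) (Fin.cons v b) where
  adj := Fin.cases huv h.adj
  injective := by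
    obtain ⟨ha, hb, hab⟩ := Sum.elim_injective.1 h.injective
    simp only [Set.Sum.elim_range, Set.mem_union, not_or] at hu hv
    refine Sum.elim_injective.2 ⟨Fin.cons_injective_iff.2 ⟨hu.1, ha⟩,
      Fin.cons_injective_iff.2 ⟨hv.2, hb⟩, ?_⟩
    refine Fin.cases (Fin.cases huv.ne fun j hj => hu.2 ⟨j, hj.symm⟩) fun i => ?_
    exact Fin.cases (fun hi => hv.1 ⟨i, hi⟩) (hab i)

lemma exists_isIndMatching_comp {V : Type} {G : SimpleGraph V} {t m n : ℕ} {a b : Fin n → V}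
    (h : IsMatchingEnum G a b) (hG : (completeBipartiteGraph (Fin t) (Fin t)).Free G)
    (hm : 2 * t ≤ m) (hn : ramseyBound 16 m ≤ n) :
    ∃ e : Fin m ↪ Fin n, IsIndMatching G (a ∘ e) (b ∘ e) := by
  classical
  let c : Fin n → Fin n → Fin 2 × Fin 2 → Prop :=
    fun i j s => G.Adj (![a, b] s.1 i) (![a, b] s.2 j)
  obtain ⟨S, -, hS, k, hk⟩ := exists_subset_monochromatic c m Finset.univ (by simpa using hn)
  let e := S.orderEmbOfFin hS
  have hcolor : ∀ i j, i < j → c (e i) (e j) = k := fun i j hij =>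
    hk _ (S.orderEmbOfFin_mem hS i) _ (S.orderEmbOfFin_mem hS j) (e.strictMono hij)
  have hinj : ∀ s : Fin 2, Function.Injective (![a, b] s ∘ e) := by
    obtain ⟨ha, hb, -⟩ := Sum.elim_injective.1 h.injective
    exact Fin.forall_fin_two.2 ⟨ha.comp e.injective, hb.comp e.injective⟩
  have hk_false : ∀ s, ¬ k s := fun s hs =>
    hG (completeBipartiteGraph_isContained_of_lt_adj hm (hinj s.1) (hinj s.2)
      fun i j hij => (congrFun (hcolor i j hij) s).mpr hs)
  have hlt : ∀ i j, i < j → ∀ s s', ¬ G.Adj (![a, b] s (e i)) (![a, b] s' (e j)) :=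
    fun i j hij s s' hadj => hk_false (s, s') ((congrFun (hcolor i j hij) (s, s')).mp hadj)
  have hends : ∀ s i, ![a ∘ e, b ∘ e] s i = ![a, b] s (e i) :=
    Fin.forall_fin_two.2 ⟨fun _ => rfl, fun _ => rfl⟩
  refine ⟨e.toEmbedding, (h.comp e.toEmbedding).isIndMatching fun i j hij s s' hadj => ?_⟩
  replace hadj : G.Adj (![a, b] s (e i)) (![a, b] s' (e j)) := hends s i ▸ hends s' j ▸ hadj
  rcases hij.lt_or_gt with hij | hji
  · exact hlt i j hij s s' hadj
  · exact hlt j i hji s' s hadj.symm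

end IsMatchingEnum

/-- `C` covers every edge of `G` with an endpoint in `X`; for `X = univ` it is a vertex cover.
It is used for `X` a bag of a tree decomposition. -/
def CoversEdgesAt {V : Type*} (G : SimpleGraph V) (X : Set V) (C : Finset V) : Prop :=
  ∀ u ∈ X, ∀ v, G.Adj u v → u ∈ C ∨ v ∈ C

lemma exists_isMatchingEnum_of_not_coversEdgesAt {V : Type*} {G : SimpleGraph V} {X : Set V}
    {n : ℕ} (h : ∀ C : Finset V, C.card < 2 * n → ¬ CoversEdgesAt G X C) :
    ∃ a b : Fin n → V, IsMatchingEnum G a b ∧ ∀ i, a i ∈ X := by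
  classical
  induction n with
  | zero => exact ⟨Fin.elim0, Fin.elim0, ⟨Fin.rec0, Function.injective_of_subsingleton _⟩, Fin.rec0⟩
  | succ n ih =>
    obtain ⟨a, b, hab, haX⟩ := ih fun C hC => h C (by omega)
    let C : Finset V := Finset.univ.image (Sum.elim a b)
    have hC : C.card ≤ n + n := by
      simpa using Finset.card_image_le (s := Finset.univ) (f := Sum.elim a b)
    have hnot := h C (by omega)
    simp only [CoversEdgesAt, not_forall, not_or] at hnot
    obtain ⟨u, huX, v, huv, hu, hv⟩ := hnot
    have hmem : ∀ w, w ∉ C → w ∉ Set.range (Sum.elim a b) := by simp [C]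
    exact ⟨Fin.cons u a, Fin.cons v b, hab.cons huv (hmem u hu) (hmem v hv), Fin.cases huX haX⟩

lemma exists_coversEdgesAt_of_free {V : Type} {G : SimpleGraph V} {X : Set V} {μ t : ℕ}
    (hG : (completeBipartiteGraph (Fin t) (Fin t)).Free G)
    (hX : ∀ (n : ℕ) (a b : Fin n → V),
      IsIndMatching G a b → (∀ i, a i ∈ X ∨ b i ∈ X) → n ≤ μ) :
    ∃ C : Finset V, C.card ≤ 2 * ramseyBound 16 (2 * t + μ + 1) ∧ CoversEdgesAt G X C := by
  by_contra! hcon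
  obtain ⟨a, b, hab, haX⟩ :=
    exists_isMatchingEnum_of_not_coversEdgesAt fun C hC => hcon C hC.le
  obtain ⟨e, he⟩ := hab.exists_isIndMatching_comp hG (by omega) le_rfl
  have : 2 * t + μ + 1 ≤ μ := hX _ _ _ he fun i => .inl (haX (e i))
  omega

end Matching

section AttachLeaves

variable {ι W : Type*} {T : SimpleGraph ι} {g : W → ι}

/-- The graph obtained from `T` by attaching, for every `w : W`, a new leaf `Sum.inr w` to the
vertex `g w`. It serves as the tree of a decomposition with additional leaf bags. -/
def attachLeaves (T : SimpleGraph ι) (g : W → ι) : SimpleGraph (ι ⊕ W) where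
  Adj
    | .inl x, .inl y => T.Adj x y
    | .inl x, .inr w => x = g w
    | .inr w, .inl x => x = g w
    | .inr _, .inr _ => False
  symm := ⟨by
    rintro (x | w) (y | w') h
    exacts [T.symm.symm _ _ h, h, h, h]⟩
  loopless := ⟨by
    rintro (x | w) h
    exacts [T.loopless.irrefl x h, h]⟩

lemma attachLeaves_adj_inr {y : ι ⊕ W} {w : W} :
    (attachLeaves T g).Adj y (.inr w) ↔ y = .inl (g w) := by
  cases y <;> simp [attachLeaves]

/-- The inclusion of `T` as an induced subgraph of `attachLeaves T g`. -/
def attachLeavesInl (T : SimpleGraph ι) (g : W → ι) : T ↪g attachLeaves T g where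
  toEmbedding := .inl
  map_rel_iff' := Iff.rfl

lemma connected_induce_attachLeaves {S : Set (ι ⊕ W)} (hS : (T.induce (.inl ⁻¹' S)).Connected)
    (hg : ∀ w, .inr w ∈ S → .inl (g w) ∈ S) : ((attachLeaves T g).induce S).Connected := by
  obtain ⟨x₀⟩ := hS.nonempty
  let f : T.induce (.inl ⁻¹' S) →g (attachLeaves T g).induce S :=
    ⟨fun x => ⟨.inl x, x.2⟩, id⟩
  have hinl : ∀ x, ((attachLeaves T g).induce S).Reachable (f x₀) (f x) := fun x =>
    (hS.preconnected x₀ x).map f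
  refine (connected_iff_exists_forall_reachable _).2 ⟨f x₀, ?_⟩
  rintro ⟨x | w, hy⟩
  · exact hinl ⟨x, hy⟩
  · have hadj : (attachLeaves T g).Adj (.inl (g w)) (.inr w) := attachLeaves_adj_inr.2 rfl
    exact (hinl ⟨g w, hg w hy⟩).trans (Adj.reachable hadj)

lemma connected_attachLeaves (hT : T.Connected) : (attachLeaves T g).Connected := by
  rw [← (induceUnivIso _).connected_iff]
  exact connected_induce_attachLeaves ((induceUnivIso T).connected_iff.2 hT) fun _ _ => trivial

lemma isAcyclic_attachLeaves (hT : T.IsAcyclic) : (attachLeaves T g).IsAcyclic := by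
  classical
  intro v c hc
  -- On a cycle the two neighbours of a vertex differ, so no leaf lies on it.
  have hsupp : ∀ y ∈ c.support, y ∈ Set.range (attachLeavesInl T g) := by
    rintro (x | w) hy
    · exact ⟨x, rfl⟩
    · have hcw := hc.rotate hy
      have hsnd := attachLeaves_adj_inr.1 (Walk.adj_snd hcw.not_nil).symm
      have hpen := attachLeaves_adj_inr.1 (Walk.adj_penultimate hcw.not_nil)
      exact absurd (hsnd.trans hpen.symm) hcw.snd_ne_penultimate
  have hrange := (attachLeavesInl T g).isoInduceRange.isAcyclic_iff.1 hT
  refine hrange (c.induce _ hsupp) (Walk.IsCycle.of_map (f := (Embedding.induce _).toHom) ?_)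
  rwa [Walk.map_induce]

lemma isTree_attachLeaves (hT : T.IsTree) : (attachLeaves T g).IsTree :=
  ⟨connected_attachLeaves hT.connected, isAcyclic_attachLeaves hT.isAcyclic⟩

end AttachLeaves

section ReplaceByNeighbors

/-- The set `X` with every vertex in `I` replaced by all of its neighbours. Applied to a bag, this
removes `I` from it while keeping the set of bags containing any other vertex connected. -/
def replaceByNeighbors {V : Type*} (G : SimpleGraph V) (I X : Set V) : Set V :=
  X \ I ∪ {u | ∃ w ∈ X ∩ I, G.Adj w u}

variable {V : Type} {G : SimpleGraph V}

lemma notMem_replaceByNeighbors {I : Set V} (hI : G.IsIndepSet I) {u : V} (hu : u ∈ I) (X : Set V) :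
    u ∉ replaceByNeighbors G I X := by
  rintro (h | ⟨w, hw, hwu⟩)
  · exact h.2 hu
  · exact hI hw.2 hu hwu.ne hwu

/-- The bags of `TreeDecomp.moveToLeaves`: in the bags `β x` the vertices of `I` are replaced by
their neighbours, and every `w ∈ I` has an additional bag `N[w]`. -/
def moveToLeavesBag {ι : Type*} (G : SimpleGraph V) (I : Set V) (β : ι → Set V) : ι ⊕ I → Set V :=
  Sum.elim (fun x => replaceByNeighbors G I (β x)) fun w => insert w.1 (G.neighborSet w)

lemma setOf_mem_moveToLeavesBag {ι : Type*} {I : Set V} (hI : G.IsIndepSet I) (β : ι → Set V)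
    (u : I) : {y | u.1 ∈ moveToLeavesBag G I β y} = {.inr u} := by
  ext (x | w)
  · simpa [moveToLeavesBag] using notMem_replaceByNeighbors hI u.2 (β x)
  · have hwu : ¬ G.Adj w u := fun h => hI w.2 u.2 h.ne h
    simp [moveToLeavesBag, hwu, Subtype.ext_iff, eq_comm]

namespace TreeDecomp

lemma connected_induce_mem_replaceByNeighbors (td : TreeDecomp G) {I : Set V} {u : V}
    (hu : u ∉ I) :
    (td.T.induce {x | u ∈ replaceByNeighbors G I (td.bag x)}).Connected := by
  obtain ⟨x₀, hx₀⟩ := td.mem_bag u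
  have hsub : {x | u ∈ td.bag x} ⊆ {x | u ∈ replaceByNeighbors G I (td.bag x)} :=
    fun x hx => .inl ⟨hx, hu⟩
  refine induce_connected_of_patches x₀ (hsub hx₀) ?_
  rintro x (hx | ⟨w, ⟨hwx, hwI⟩, hwu⟩)
  · exact ⟨_, hsub, hx₀, hx.1, (td.bag_conn u).preconnected _ _⟩
  · obtain ⟨z, hwz, huz⟩ := td.edge_bag hwu
    have hunion : (td.T.induce ({x | u ∈ td.bag x} ∪ {x | w ∈ td.bag x})).Connected :=
      induce_union_connected (td.bag_conn u).preconnected (td.bag_conn w).preconnected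
        ⟨z, huz, hwz⟩
    exact ⟨_, Set.union_subset hsub fun y hy => .inr ⟨w, ⟨hy, hwI⟩, hwu⟩, .inl hx₀, .inr hwx,
      hunion.preconnected _ _⟩

/-- The tree decomposition in which every vertex `w` of the independent set `I` has been moved to
the bag of a new leaf, attached to an arbitrary node whose bag in `td` contains `w`. -/
noncomputable def moveToLeaves (td : TreeDecomp G) {I : Set V} [Finite I] (hI : G.IsIndepSet I) :
    TreeDecomp G where
  ι := td.ι ⊕ I
  fintype_ι := haveI := td.fintype_ι; .ofFinite _
  T := attachLeaves td.T fun w : I => (td.mem_bag w).choose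
  isTree := isTree_attachLeaves td.isTree
  bag := moveToLeavesBag G I td.bag
  mem_bag v := by
    by_cases hv : v ∈ I
    · exact ⟨.inr ⟨v, hv⟩, .inl rfl⟩
    · obtain ⟨x, hx⟩ := td.mem_bag v
      exact ⟨.inl x, .inl ⟨hx, hv⟩⟩
  edge_bag u v huv := by
    by_cases hu : u ∈ I
    · exact ⟨.inr ⟨u, hu⟩, .inl rfl, .inr huv⟩
    by_cases hv : v ∈ I
    · exact ⟨.inr ⟨v, hv⟩, .inr huv.symm, .inl rfl⟩
    obtain ⟨x, hux, hvx⟩ := td.edge_bag huv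
    exact ⟨.inl x, .inl ⟨hux, hu⟩, .inl ⟨hvx, hv⟩⟩
  bag_conn u := by
    by_cases hu : u ∈ I
    · rw [setOf_mem_moveToLeavesBag hI td.bag ⟨u, hu⟩]
      exact IsTree.of_subsingleton.connected
    · refine connected_induce_attachLeaves (td.connected_induce_mem_replaceByNeighbors hu) ?_
      rintro w (rfl | hwu)
      · exact absurd w.2 hu
      · exact .inr ⟨w, ⟨(td.mem_bag w).choose_spec, w.2⟩, hwu⟩

end TreeDecomp

end ReplaceByNeighbors

section Treewidth

/-- The vertices of degree at most `d` all of whose neighbours have degree larger than `d`: the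
isolated vertices of the subgraph induced by the vertices of degree at most `d`. -/
def isolatedLowDegree {V : Type*} (G : SimpleGraph V) [G.LocallyFinite] (d : ℕ) : Set V :=
  {v | G.degree v ≤ d ∧ ∀ w, G.Adj v w → d < G.degree w}

lemma isIndepSet_isolatedLowDegree {V : Type*} (G : SimpleGraph V) [G.LocallyFinite] (d : ℕ) :
    G.IsIndepSet (isolatedLowDegree G d) :=
  fun _ hu v hv _ huv => (hu.2 v huv).not_ge hv.1

namespace CoversEdgesAt

variable {V : Type*} {G : SimpleGraph V} {X : Set V} {C : Finset V} {d : ℕ}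

lemma degree_le [G.LocallyFinite] (hC : CoversEdgesAt G X C) {u : V} (hu : u ∈ X) (huC : u ∉ C) :
    G.degree u ≤ C.card :=
  Finset.card_le_card fun v hv =>
    (hC u hu v ((G.mem_neighborFinset u v).1 hv)).resolve_left huC

lemma replaceByNeighbors_subset [DecidableEq V] [G.LocallyFinite] (hC : CoversEdgesAt G X C)
    (hd : C.card ≤ d) :
    replaceByNeighbors G (isolatedLowDegree G d) X ⊆
      ↑(C ∪ {c ∈ C | G.degree c ≤ d}.biUnion fun c => G.neighborFinset c) := by
  have hmem : ∀ {u w}, w ∈ C → G.degree w ≤ d → G.Adj w u →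
      u ∈ C ∪ {c ∈ C | G.degree c ≤ d}.biUnion fun c => G.neighborFinset c :=
    fun {u w} hw hwd hwu => Finset.mem_union_right _ <| Finset.mem_biUnion.2
      ⟨w, Finset.mem_filter.2 ⟨hw, hwd⟩, (G.mem_neighborFinset w u).2 hwu⟩
  rintro u (⟨huX, huI⟩ | ⟨w, ⟨hwX, hwI⟩, hwu⟩)
  · by_cases huC : u ∈ C
    · exact Finset.mem_union_left _ huC
    · obtain ⟨w, huw, hwd⟩ : ∃ w, G.Adj u w ∧ G.degree w ≤ d := by
        by_contra! hcon
        exact huI ⟨(hC.degree_le huX huC).trans hd, hcon⟩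
      exact hmem ((hC u huX w huw).resolve_left huC) hwd huw.symm
  · rcases hC w hwX u hwu with hwC | huC
    · exact hmem hwC hwI.1 hwu
    · exact Finset.mem_union_left _ huC

lemma ncard_replaceByNeighbors_le [G.LocallyFinite] (hC : CoversEdgesAt G X C) (hd : C.card ≤ d) :
    (replaceByNeighbors G (isolatedLowDegree G d) X).ncard ≤ d + d * d := by
  classical
  refine (Set.ncard_le_ncard (hC.replaceByNeighbors_subset hd) (Finset.finite_toSet _)).trans ?_
  rw [Set.ncard_coe_finset]
  calc _ ≤ C.card + _ := Finset.card_union_le _ _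
    _ ≤ C.card + {c ∈ C | G.degree c ≤ d}.card * d := by
      gcongr
      exact Finset.card_biUnion_le_card_mul _ _ d fun c hc => (Finset.mem_filter.1 hc).2
    _ ≤ d + d * d := by
      gcongr
      exact (Finset.card_filter_le _ _).trans hd

end CoversEdgesAt

variable {V : Type}

theorem treewidth_le_of_coversEdgesAt [Finite V] {G : SimpleGraph V} (td : TreeDecomp G) {d : ℕ}
    (hd : ∀ x, ∃ C : Finset V, C.card ≤ d ∧ CoversEdgesAt G (td.bag x) C) :
    treewidth G ≤ d + d * d := by
  classical
  have := Fintype.ofFinite V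
  refine Nat.sInf_le ⟨td.moveToLeaves (isIndepSet_isolatedLowDegree G d), ?_⟩
  rintro (x | w)
  · obtain ⟨C, hCd, hC⟩ := hd x
    exact (hC.ncard_replaceByNeighbors_le hCd).trans (Nat.le_succ _)
  · calc (insert w.1 (G.neighborSet w)).ncard
        ≤ (G.neighborSet w).ncard + 1 := Set.ncard_insert_le _ _
      _ = G.degree w + 1 := by
        rw [Set.ncard_eq_toFinset_card', ← G.card_neighborFinset_eq_degree]; rfl
      _ ≤ d + d * d + 1 := by
        gcongr
        exact w.2.1.trans (Nat.le_add_right _ _)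

/-- The trivial tree decomposition of `G`, with a single bag. It shows that the infimum defining
`treeMu` is not taken over the empty set. -/
def TreeDecomp.single (G : SimpleGraph V) : TreeDecomp G where
  ι := Unit
  fintype_ι := inferInstance
  T := ⊥
  isTree := .of_subsingleton
  bag _ := Set.univ
  mem_bag _ := ⟨(), trivial⟩
  edge_bag _ _ _ := ⟨(), trivial, trivial⟩
  bag_conn v :=
    have : Nonempty {_x : Unit | v ∈ Set.univ} := ⟨⟨(), trivial⟩⟩
    IsTree.of_subsingleton.connected

lemma exists_muLE_treeMu [Finite V] (G : SimpleGraph V) :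
    ∃ td : TreeDecomp G, td.MuLE (treeMu G) := by
  refine Nat.sInf_mem (s := {n | ∃ td : TreeDecomp G, td.MuLE n})
    ⟨Nat.card V, .single G, fun _ n a b h _ => ?_⟩
  have ha : Function.Injective a := fun i j hij => by_contra fun hne => (h.2 i j hne).1 hij
  simpa using Nat.card_le_card_of_injective a ha

end Treewidth

/-- For all positive `μ` and `t` there exists `K'` such that every finite graph with
induced matching treewidth at most `μ` and with no `K_{t,t}` subgraph (not necessarily
induced) has treewidth strictly less than `K'`. -/
theorem stmt17 (μ t : ℕ) (hμ : 0 < μ) (ht : 0 < t) :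
    ∃ K' : ℕ, ∀ (V : Type) [Fintype V] (G : SimpleGraph V),
      treeMu G ≤ μ →
      (¬ ∃ X Y : Finset V, Disjoint X Y ∧ X.card = t ∧ Y.card = t ∧
        ∀ x ∈ X, ∀ y ∈ Y, G.Adj x y) →
      treewidth G < K' := by
  set d := 2 * ramseyBound 16 (2 * t + μ + 1)
  refine ⟨d + d * d + 1, fun V _ G hμG hG => Nat.lt_succ_of_le ?_⟩
  have hfree : (completeBipartiteGraph (Fin t) (Fin t)).Free G := fun hcon => by
    obtain ⟨X, Y, hX, hY, hXY⟩ := completeBipartiteGraph_isContained_iff.1 hcon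
    exact hG ⟨X, Y, Finset.disjoint_coe.1 hXY.disjoint, by simpa using hX, by simpa using hY,
      fun x hx y hy => hXY hx hy⟩
  obtain ⟨td, htd⟩ := exists_muLE_treeMu G
  exact treewidth_le_of_coversEdgesAt td fun x =>
    exists_coversEdgesAt_of_free hfree fun n a b h hx => (htd x n a b h hx).trans hμG
end
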